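/- Let (A_n) be a sequence of linear maps of ℝ^d (d ≥ 3) each preserving the standard Lorentz form q, and suppose (A_n) is divergent, i.e. the operator norms ‖A_n‖ are unbounded. Then there is a subsequence (B_n), and a nonzero isotropic vector u ∈ ℝ^d, such that: (i) the approximately stable set AS(0,(B_n)) equals the q-orthogonal hyperplane u^⊥ = {v : ⟨u,v⟩ = 0}, a lightlike hyperplane (the restriction of q to it is degenerate); and (ii) the set of strongly approximately stable vectors of (B_n) equals the one-dimensional isotropic line ℝu = (AS(0,(B_n)))^⊥. -/

import Mathlib

open Filter

/-- The standard Lorentz quadratic form `q(x) = -x₁² + x₂² + ⋯ + x_d²` on `ℝ^d`. -/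
def lorentzQ {d : ℕ} (x : Fin d → ℝ) : ℝ :=
  ∑ i : Fin d, (if (i : ℕ) = 0 then (-1 : ℝ) else 1) * x i ^ 2

/-- The polar bilinear form of the standard Lorentz quadratic form. -/
def lorentzB {d : ℕ} (x y : Fin d → ℝ) : ℝ :=
  ∑ i : Fin d, (if (i : ℕ) = 0 then (-1 : ℝ) else 1) * x i * y i

/-- `v` is approximately stable for `(A n)` if it is the limit of a sequence `(u n)`
with `(A n (u n))` bounded. -/
def ApproxStable {d : ℕ} (A : ℕ → Matrix (Fin d) (Fin d) ℝ) (v : Fin d → ℝ) : Prop :=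
  ∃ u : ℕ → Fin d → ℝ, Tendsto u atTop (nhds v) ∧ ∃ C : ℝ, ∀ n, ‖(A n).mulVec (u n)‖ ≤ C

/-- `v` is strongly approximately stable for `(A n)` if it is the limit of a sequence
`(u n)` with `A n (u n) → 0`. -/
def StronglyApproxStable {d : ℕ} (A : ℕ → Matrix (Fin d) (Fin d) ℝ) (v : Fin d → ℝ) : Prop :=
  ∃ u : ℕ → Fin d → ℝ, Tendsto u atTop (nhds v) ∧
    Tendsto (fun n => (A n).mulVec (u n)) atTop (nhds 0)

/-!
A Lorentz map `M` is controlled by its time coordinate, since in the Euclidean norm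
`|M x|² = q(M x) + 2 (M x)₀² = q(x) + 2 (M x)₀²`. Writing `(M x)₀ = ⟨t, x⟩` with `t = -M⁻¹ e₀`, a
unit timelike vector, divergence of `(A n)` means that the vectors `t n` are unbounded. Along a
subsequence `|t n| → ∞` and `t n / |t n|` converges to some `u`, isotropic because `q(t n) = -1`.
If `x n → v` and `A n (x n)` is bounded, dividing `⟨t n, x n⟩` by `|t n|` gives `⟨u, v⟩ = 0`.
Conversely a vector orthogonal to `u` is a limit of vectors `x n` orthogonal to `t n`, for which
`|A n (x n)|² = q(x n)`; so it is approximately stable, and strongly so if it is isotropic. Finally,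
the isotropic vectors of `u^⊥` form the line `ℝu`.
-/

open scoped Matrix Topology

theorem exists_subseq_tendsto_atTop_of_not_bddAbove {f : ℕ → ℝ}
    (hf : ¬ BddAbove (Set.range f)) :
    ∃ φ : ℕ → ℕ, StrictMono φ ∧ Tendsto (f ∘ φ) atTop atTop := by
  have frequently_gt (n : ℕ) : ∃ᶠ k in atTop, (n : ℝ) < f k := fun h =>
    hf (IsBoundedUnder.bddAbove_range ⟨n, by simpa using h⟩)
  obtain ⟨φ, hφ, hlt⟩ := extraction_forall_of_frequently frequently_gt
  exact ⟨φ, hφ, tendsto_atTop_mono (fun n => (hlt n).le) tendsto_natCast_atTop_atTop⟩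

theorem exists_subseq_tendsto_direction {E : Type*} [NormedAddCommGroup E] [NormedSpace ℝ E]
    [ProperSpace E] {a : ℕ → E} (ha : ¬ BddAbove (Set.range fun n => ‖a n‖)) :
    ∃ (φ : ℕ → ℕ) (u : E), StrictMono φ ∧ u ≠ 0 ∧
      Tendsto (fun n => ‖a (φ n)‖) atTop atTop ∧
      Tendsto (fun n => ‖a (φ n)‖⁻¹ • a (φ n)) atTop (𝓝 u) := by
  obtain ⟨φ, hφ, hnorm⟩ := exists_subseq_tendsto_atTop_of_not_bddAbove ha
  have frequently_unit :
      ∃ᶠ n in atTop, ‖a (φ n)‖⁻¹ • a (φ n) ∈ Metric.sphere (0 : E) 1 := by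
    refine ((hnorm.eventually_gt_atTop 0).mono fun n hn => ?_).frequently
    rw [mem_sphere_zero_iff_norm, norm_smul, norm_inv, norm_norm]
    exact inv_mul_cancel₀ hn.ne'
  obtain ⟨u, hu, ψ, hψ, hlim⟩ := (isCompact_sphere (0 : E) 1).tendsto_subseq' frequently_unit
  exact ⟨φ ∘ ψ, u, hφ.comp hψ, ne_zero_of_mem_unit_sphere ⟨u, hu⟩,
    hnorm.comp hψ.tendsto_atTop, hlim⟩

theorem norm_sq_le_sum_sq {ι : Type*} [Fintype ι] (x : ι → ℝ) : ‖x‖ ^ 2 ≤ ∑ i, x i ^ 2 := by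
  refine (Real.le_sqrt (norm_nonneg x) (by positivity)).1 ?_
  refine (pi_norm_le_iff_of_nonneg (Real.sqrt_nonneg _)).2 fun i => Real.le_sqrt_of_sq_le ?_
  rw [Real.norm_eq_abs, sq_abs]
  exact Finset.single_le_sum (fun j _ => sq_nonneg (x j)) (Finset.mem_univ i)

section LorentzForm

variable {d : ℕ}

theorem lorentzB_self (x : Fin d → ℝ) : lorentzB x x = lorentzQ x :=
  Finset.sum_congr rfl fun _ _ => by ring

theorem lorentzB_smul_left (c : ℝ) (x y : Fin d → ℝ) :
    lorentzB (c • x) y = c * lorentzB x y := by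
  simp only [lorentzB, Finset.mul_sum, Pi.smul_apply, smul_eq_mul]
  exact Finset.sum_congr rfl fun _ _ => by ring

theorem lorentzB_smul_right (c : ℝ) (x y : Fin d → ℝ) :
    lorentzB x (c • y) = c * lorentzB x y := by
  simp only [lorentzB, Finset.mul_sum, Pi.smul_apply, smul_eq_mul]
  exact Finset.sum_congr rfl fun _ _ => by ring

theorem lorentzB_add_right (x y z : Fin d → ℝ) :
    lorentzB x (y + z) = lorentzB x y + lorentzB x z := by
  simp only [lorentzB, ← Finset.sum_add_distrib, Pi.add_apply, mul_add]

theorem lorentzB_zero_left (y : Fin d → ℝ) : lorentzB 0 y = 0 := by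
  simp [lorentzB]

theorem lorentzB_single_right (x : Fin d → ℝ) (i : Fin d) (c : ℝ) :
    lorentzB x (Pi.single i c) = (if (i : ℕ) = 0 then -1 else 1) * x i * c := by
  simp [lorentzB, Pi.single_apply]

theorem lorentzQ_zero : lorentzQ (0 : Fin d → ℝ) = 0 := by
  simp [lorentzQ]

theorem lorentzQ_smul (c : ℝ) (x : Fin d → ℝ) : lorentzQ (c • x) = c ^ 2 * lorentzQ x := by
  rw [← lorentzB_self, lorentzB_smul_left, lorentzB_smul_right, lorentzB_self]
  ring

theorem lorentzQ_add (x y : Fin d → ℝ) :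
    lorentzQ (x + y) = lorentzQ x + 2 * lorentzB x y + lorentzQ y := by
  simp only [lorentzQ, lorentzB, Finset.mul_sum, ← Finset.sum_add_distrib, Pi.add_apply]
  exact Finset.sum_congr rfl fun _ _ => by ring

theorem eq_zero_of_forall_lorentzB_eq_zero {x : Fin d → ℝ} (hx : ∀ y, lorentzB x y = 0) :
    x = 0 := by
  funext i
  have hi := hx (Pi.single i 1)
  rw [lorentzB_single_right] at hi
  split_ifs at hi <;> simpa using hi

theorem abs_lorentzB_le (x y : Fin d → ℝ) : |lorentzB x y| ≤ d * ‖x‖ * ‖y‖ :=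
  calc |lorentzB x y|
      ≤ ∑ i : Fin d, |(if (i : ℕ) = 0 then (-1 : ℝ) else 1) * x i * y i| :=
        Finset.abs_sum_le_sum_abs _ _
    _ = ∑ i : Fin d, ‖x i‖ * ‖y i‖ :=
        Finset.sum_congr rfl fun i _ => by split_ifs <;> simp [abs_mul]
    _ ≤ ∑ _i : Fin d, ‖x‖ * ‖y‖ := by
        gcongr <;> exact norm_le_pi_norm _ _
    _ = d * ‖x‖ * ‖y‖ := by simp [mul_assoc]

theorem lorentzQ_le (x : Fin d → ℝ) : lorentzQ x ≤ d * ‖x‖ ^ 2 := by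
  rw [← lorentzB_self, sq, ← mul_assoc]
  exact (le_abs_self _).trans (abs_lorentzB_le x x)

theorem continuous_lorentzQ : Continuous (lorentzQ : (Fin d → ℝ) → ℝ) := by
  unfold lorentzQ
  fun_prop

theorem tendsto_lorentzB {ι : Type*} {l : Filter ι} {x y : ι → Fin d → ℝ} {a b : Fin d → ℝ}
    (hx : Tendsto x l (𝓝 a)) (hy : Tendsto y l (𝓝 b)) :
    Tendsto (fun n => lorentzB (x n) (y n)) l (𝓝 (lorentzB a b)) := by
  have continuous_lorentzB : Continuous fun p : (Fin d → ℝ) × (Fin d → ℝ) =>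
      lorentzB p.1 p.2 := by
    unfold lorentzB
    fun_prop
  exact (continuous_lorentzB.tendsto (a, b)).comp (hx.prodMk_nhds hy)

end LorentzForm

section Causal

variable {d : ℕ}

theorem lorentzQ_succ (x : Fin (d + 1) → ℝ) :
    lorentzQ x = -x 0 ^ 2 + ∑ i : Fin d, x i.succ ^ 2 := by
  simp [lorentzQ, Fin.sum_univ_succ]

theorem norm_sq_le_lorentzQ_add (x : Fin (d + 1) → ℝ) :
    ‖x‖ ^ 2 ≤ lorentzQ x + 2 * x 0 ^ 2 := by
  have sum_sq_eq : ∑ i, x i ^ 2 = lorentzQ x + 2 * x 0 ^ 2 := by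
    rw [lorentzQ_succ, Fin.sum_univ_succ]
    ring
  rw [← sum_sq_eq]
  exact norm_sq_le_sum_sq x

theorem eq_zero_of_lorentzQ_nonpos {x : Fin (d + 1) → ℝ} (hx : lorentzQ x ≤ 0)
    (hx0 : x 0 = 0) : x = 0 := by
  have norm_sq_le := norm_sq_le_lorentzQ_add x
  rw [hx0] at norm_sq_le
  exact norm_eq_zero.1 (pow_eq_zero_iff two_ne_zero |>.1 <|
    le_antisymm (by linarith) (sq_nonneg ‖x‖))

theorem exists_eq_smul_of_lorentzB_eq_zero {u v : Fin (d + 1) → ℝ} (hu0 : u ≠ 0)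
    (hu : lorentzQ u ≤ 0) (hv : lorentzQ v ≤ 0) (huv : lorentzB u v = 0) :
    ∃ c : ℝ, v = c • u := by
  have time_ne_zero : u 0 ≠ 0 := fun h => hu0 (eq_zero_of_lorentzQ_nonpos hu h)
  set c : ℝ := v 0 / u 0
  have residual_causal : lorentzQ (-c • u + v) ≤ 0 := by
    rw [lorentzQ_add, lorentzQ_smul, lorentzB_smul_left, huv]
    nlinarith [sq_nonneg (-c)]
  have residual_time : (-c • u + v) 0 = 0 := by
    simp [c, time_ne_zero]
  have residual_eq_zero := eq_zero_of_lorentzQ_nonpos residual_causal residual_time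
  rw [neg_smul, neg_add_eq_zero] at residual_eq_zero
  exact ⟨c, residual_eq_zero.symm⟩

theorem exists_tendsto_forall_lorentzB_eq_zero {ι : Type*} {l : Filter ι}
    {b : ι → Fin (d + 1) → ℝ} {u v : Fin (d + 1) → ℝ} (hb : Tendsto b l (𝓝 u))
    (hb0 : ∀ n, b n 0 ≠ 0) (hu0 : u 0 ≠ 0) (huv : lorentzB u v = 0) :
    ∃ x : ι → Fin (d + 1) → ℝ, Tendsto x l (𝓝 v) ∧ ∀ n, lorentzB (b n) (x n) = 0 := by
  refine ⟨fun n => v + Pi.single 0 (lorentzB (b n) v / b n 0), ?_, fun n => ?_⟩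
  · have time_correction : Tendsto (fun n => lorentzB (b n) v / b n 0) l (𝓝 0) := by
      have quotient := (tendsto_lorentzB hb (tendsto_const_nhds (x := v))).div
        (tendsto_pi_nhds.1 hb 0) hu0
      rwa [huv, zero_div] at quotient
    have correction := ((continuous_single (A := fun _ : Fin (d + 1) => ℝ) 0).tendsto 0).comp
      time_correction
    simpa using tendsto_const_nhds (x := v) |>.add correction
  · rw [lorentzB_add_right, lorentzB_single_right]
    field_simp [hb0 n]
    simp

end Causal

/-- `M` preserves the standard Lorentz form, i.e. it belongs to the full Lorentz group. -/
def IsLorentz {d : ℕ} (M : Matrix (Fin d) (Fin d) ℝ) : Prop :=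
  ∀ x : Fin d → ℝ, lorentzQ (M *ᵥ x) = lorentzQ x

namespace IsLorentz

section

variable {d : ℕ} {M : Matrix (Fin d) (Fin d) ℝ}

theorem lorentzB_mulVec (hM : IsLorentz M) (x y : Fin d → ℝ) :
    lorentzB (M *ᵥ x) (M *ᵥ y) = lorentzB x y := by
  have polarization := hM (x + y)
  rw [Matrix.mulVec_add, lorentzQ_add, lorentzQ_add, hM, hM] at polarization
  linarith

theorem mulVec_injective (hM : IsLorentz M) : Function.Injective M.mulVec := by
  refine (injective_iff_map_eq_zero M.mulVecLin).2 fun x hx => ?_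
  refine eq_zero_of_forall_lorentzB_eq_zero fun y => ?_
  rw [← hM.lorentzB_mulVec, ← Matrix.mulVecLin_apply, hx, lorentzB_zero_left]

theorem mulVec_surjective (hM : IsLorentz M) : Function.Surjective M.mulVec :=
  Matrix.mulVec_surjective_iff_isUnit.2 (Matrix.mulVec_injective_iff_isUnit.1 hM.mulVec_injective)

end

variable {d : ℕ} {M : Matrix (Fin (d + 1)) (Fin (d + 1)) ℝ}

theorem exists_lorentzB_eq_mulVec_zero (hM : IsLorentz M) :
    ∃ t : Fin (d + 1) → ℝ, lorentzQ t = -1 ∧ ∀ x, lorentzB t x = (M *ᵥ x) 0 := by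
  obtain ⟨t, ht⟩ := hM.mulVec_surjective (Pi.single 0 (-1))
  refine ⟨t, ?_, fun x => ?_⟩
  · rw [← hM, ht, ← lorentzB_self, lorentzB_single_right]
    simp
  · rw [← hM.lorentzB_mulVec, ht]
    simp [lorentzB, Pi.single_apply]

theorem norm_mulVec_sq_le (hM : IsLorentz M) {t : Fin (d + 1) → ℝ}
    (ht : ∀ x, lorentzB t x = (M *ᵥ x) 0) (x : Fin (d + 1) → ℝ) :
    ‖M *ᵥ x‖ ^ 2 ≤ lorentzQ x + 2 * lorentzB t x ^ 2 := by
  rw [ht, ← hM x]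
  exact norm_sq_le_lorentzQ_add _

theorem exists_forall_norm_mulVec_le {ι : Type*}
    {A : ι → Matrix (Fin (d + 1)) (Fin (d + 1)) ℝ} (hA : ∀ n, IsLorentz (A n))
    {t : ι → Fin (d + 1) → ℝ} (ht : ∀ n x, lorentzB (t n) x = (A n *ᵥ x) 0)
    (hbdd : BddAbove (Set.range fun n => ‖t n‖)) :
    ∃ C : ℝ, ∀ n x, ‖A n *ᵥ x‖ ≤ C * ‖x‖ := by
  obtain ⟨R, hR⟩ := hbdd
  set D : ℝ := ((d + 1 : ℕ) : ℝ)
  refine ⟨√(D + 2 * (D * R) ^ 2), fun n x => ?_⟩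
  have time_le : |lorentzB (t n) x| ≤ D * R * ‖x‖ :=
    (abs_lorentzB_le _ _).trans (by gcongr; exact hR ⟨n, rfl⟩)
  refine le_of_sq_le_sq ?_ (by positivity)
  calc ‖A n *ᵥ x‖ ^ 2
      ≤ lorentzQ x + 2 * |lorentzB (t n) x| ^ 2 := by
        rw [sq_abs]
        exact (hA n).norm_mulVec_sq_le (ht n) x
    _ ≤ D * ‖x‖ ^ 2 + 2 * (D * R * ‖x‖) ^ 2 := by
        gcongr
        exact lorentzQ_le x
    _ = (√(D + 2 * (D * R) ^ 2) * ‖x‖) ^ 2 := by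
        rw [mul_pow √_, Real.sq_sqrt (by positivity)]
        ring

end IsLorentz

section Stability

variable {d : ℕ} {A : ℕ → Matrix (Fin d) (Fin d) ℝ} {v : Fin d → ℝ}

theorem StronglyApproxStable.approxStable (hv : StronglyApproxStable A v) :
    ApproxStable A v := by
  obtain ⟨x, hx, hAx⟩ := hv
  obtain ⟨C, hC⟩ := hAx.norm.bddAbove_range
  exact ⟨x, hx, C, fun n => hC ⟨n, rfl⟩⟩

theorem StronglyApproxStable.lorentzQ_eq_zero (hA : ∀ n, IsLorentz (A n))
    (hv : StronglyApproxStable A v) : lorentzQ v = 0 := by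
  obtain ⟨x, hx, hAx⟩ := hv
  have lorentzQ_tendsto := (continuous_lorentzQ.tendsto 0).comp hAx
  rw [lorentzQ_zero] at lorentzQ_tendsto
  exact tendsto_nhds_unique ((continuous_lorentzQ.tendsto v).comp hx)
    (lorentzQ_tendsto.congr fun n => hA n (x n))

end Stability

/-- The Lorentz maps `M n` diverge with limit direction `u`: the unit timelike vectors `t n`
representing the time coordinate `x ↦ (M n x)₀` through the Lorentz form, that is
`t n = -(M n)⁻¹ e₀`, escape to infinity and their directions converge to `u`. -/
structure DivergesAlong {d : ℕ} (M : ℕ → Matrix (Fin (d + 1)) (Fin (d + 1)) ℝ)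
    (t : ℕ → Fin (d + 1) → ℝ) (u : Fin (d + 1) → ℝ) : Prop where
  isLorentz : ∀ n, IsLorentz (M n)
  timelike : ∀ n, lorentzQ (t n) = -1
  lorentzB_eq : ∀ n x, lorentzB (t n) x = (M n *ᵥ x) 0
  tendsto_norm : Tendsto (fun n => ‖t n‖) atTop atTop
  tendsto_direction : Tendsto (fun n => ‖t n‖⁻¹ • t n) atTop (𝓝 u)
  direction_ne_zero : u ≠ 0

theorem exists_subseq_divergesAlong {d : ℕ} {A : ℕ → Matrix (Fin (d + 1)) (Fin (d + 1)) ℝ}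
    (hA : ∀ n, IsLorentz (A n)) (hdiv : ¬ ∃ C : ℝ, ∀ n v, ‖A n *ᵥ v‖ ≤ C * ‖v‖) :
    ∃ (φ : ℕ → ℕ) (t : ℕ → Fin (d + 1) → ℝ) (u : Fin (d + 1) → ℝ),
      StrictMono φ ∧ DivergesAlong (fun n => A (φ n)) t u := by
  choose t timelike lorentzB_eq using fun n => (hA n).exists_lorentzB_eq_mulVec_zero
  have unbounded : ¬ BddAbove (Set.range fun n => ‖t n‖) := fun hbdd =>
    hdiv (IsLorentz.exists_forall_norm_mulVec_le hA lorentzB_eq hbdd)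
  obtain ⟨φ, u, hφ, hu, hnorm, hlim⟩ := exists_subseq_tendsto_direction unbounded
  exact ⟨φ, t ∘ φ, u, hφ, fun n => hA (φ n), fun n => timelike (φ n),
    fun n => lorentzB_eq (φ n), hnorm, hlim, hu⟩

namespace DivergesAlong

variable {d : ℕ} {M : ℕ → Matrix (Fin (d + 1)) (Fin (d + 1)) ℝ}
  {t : ℕ → Fin (d + 1) → ℝ} {u v : Fin (d + 1) → ℝ}

theorem lorentzQ_direction (h : DivergesAlong M t u) : lorentzQ u = 0 := by
  have lorentzQ_normalized (n : ℕ) : lorentzQ (‖t n‖⁻¹ • t n) = -(‖t n‖⁻¹ ^ 2) := by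
    rw [lorentzQ_smul, h.timelike, mul_neg_one]
  have tendsto_zero : Tendsto (fun n => -(‖t n‖⁻¹ ^ 2)) atTop (𝓝 0) := by
    simpa using (h.tendsto_norm.inv_tendsto_atTop.pow 2).neg
  refine tendsto_nhds_unique ?_ tendsto_zero
  exact ((continuous_lorentzQ.tendsto u).comp h.tendsto_direction).congr lorentzQ_normalized

theorem lorentzB_eq_zero_of_approxStable (h : DivergesAlong M t u) (hv : ApproxStable M v) :
    lorentzB u v = 0 := by
  obtain ⟨x, hx, C, hC⟩ := hv
  refine tendsto_nhds_unique (tendsto_lorentzB h.tendsto_direction hx) ?_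
  have bound_tendsto : Tendsto (fun n => ‖t n‖⁻¹ * C) atTop (𝓝 0) := by
    simpa using h.tendsto_norm.inv_tendsto_atTop.mul_const C
  refine squeeze_zero_norm (fun n => ?_) bound_tendsto
  rw [lorentzB_smul_left, h.lorentzB_eq, norm_mul, norm_inv, norm_norm]
  gcongr
  exact (norm_le_pi_norm _ 0).trans (hC n)

theorem exists_tendsto_forall_norm_mulVec_le (h : DivergesAlong M t u)
    (huv : lorentzB u v = 0) :
    ∃ x : ℕ → Fin (d + 1) → ℝ, Tendsto x atTop (𝓝 v) ∧
      ∀ n, ‖M n *ᵥ x n‖ ≤ √(lorentzQ (x n)) := by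
  have ne_zero (n : ℕ) : t n ≠ 0 := by
    intro hn
    simpa [hn, lorentzQ_zero] using h.timelike n
  have inv_norm_ne_zero (n : ℕ) : ‖t n‖⁻¹ ≠ 0 := inv_ne_zero (norm_ne_zero_iff.2 (ne_zero n))
  have time_ne_zero (n : ℕ) : t n 0 ≠ 0 := fun hn =>
    ne_zero n (eq_zero_of_lorentzQ_nonpos (by simp [h.timelike]) hn)
  have direction_time_ne_zero : u 0 ≠ 0 := fun hu =>
    h.direction_ne_zero (eq_zero_of_lorentzQ_nonpos h.lorentzQ_direction.le hu)
  obtain ⟨x, hx, horth⟩ := exists_tendsto_forall_lorentzB_eq_zero h.tendsto_direction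
    (fun n => mul_ne_zero (inv_norm_ne_zero n) (time_ne_zero n)) direction_time_ne_zero huv
  refine ⟨x, hx, fun n => Real.le_sqrt_of_sq_le ?_⟩
  have orthogonal : lorentzB (t n) (x n) = 0 := by
    simpa [lorentzB_smul_left, ne_zero n] using horth n
  simpa [orthogonal] using (h.isLorentz n).norm_mulVec_sq_le (h.lorentzB_eq n) (x n)

theorem approxStable_iff (h : DivergesAlong M t u) :
    ApproxStable M v ↔ lorentzB u v = 0 := by
  refine ⟨h.lorentzB_eq_zero_of_approxStable, fun huv => ?_⟩
  obtain ⟨x, hx, hle⟩ := h.exists_tendsto_forall_norm_mulVec_le huv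
  obtain ⟨C, hC⟩ := ((continuous_lorentzQ.tendsto v).comp hx).sqrt.bddAbove_range
  exact ⟨x, hx, C, fun n => (hle n).trans (hC ⟨n, rfl⟩)⟩

theorem stronglyApproxStable_of_lorentzQ_eq_zero (h : DivergesAlong M t u)
    (huv : lorentzB u v = 0) (hv : lorentzQ v = 0) : StronglyApproxStable M v := by
  obtain ⟨x, hx, hle⟩ := h.exists_tendsto_forall_norm_mulVec_le huv
  have sqrt_tendsto := ((continuous_lorentzQ.tendsto v).comp hx).sqrt
  rw [hv, Real.sqrt_zero] at sqrt_tendsto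
  exact ⟨x, hx, squeeze_zero_norm hle sqrt_tendsto⟩

theorem stronglyApproxStable_iff (h : DivergesAlong M t u) :
    StronglyApproxStable M v ↔ ∃ c : ℝ, v = c • u := by
  constructor
  · intro hv
    exact exists_eq_smul_of_lorentzB_eq_zero h.direction_ne_zero h.lorentzQ_direction.le
      (hv.lorentzQ_eq_zero h.isLorentz).le (h.approxStable_iff.1 hv.approxStable)
  · rintro ⟨c, rfl⟩
    apply h.stronglyApproxStable_of_lorentzQ_eq_zero
    · rw [lorentzB_smul_right, lorentzB_self, h.lorentzQ_direction, mul_zero]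
    · rw [lorentzQ_smul, h.lorentzQ_direction, mul_zero]

end DivergesAlong

theorem lorentz_divergent_subsequence_general {d : ℕ}
    (A : ℕ → Matrix (Fin d) (Fin d) ℝ)
    (hA : ∀ n (x : Fin d → ℝ), lorentzQ ((A n).mulVec x) = lorentzQ x)
    (hdiv : ¬ ∃ C : ℝ, ∀ n (v : Fin d → ℝ), ‖(A n).mulVec v‖ ≤ C * ‖v‖) :
    ∃ (φ : ℕ → ℕ) (u : Fin d → ℝ), StrictMono φ ∧ u ≠ 0 ∧ lorentzQ u = 0 ∧
      {v | ApproxStable (fun n => A (φ n)) v} = {v | lorentzB u v = 0} ∧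
      (∃ w : Fin d → ℝ, w ≠ 0 ∧ lorentzB u w = 0 ∧
        ∀ v : Fin d → ℝ, lorentzB u v = 0 → lorentzB w v = 0) ∧
      {v | StronglyApproxStable (fun n => A (φ n)) v} = {v : Fin d → ℝ | ∃ c : ℝ, v = c • u} := by
  obtain _ | d := d
  · exact absurd ⟨0, fun n v => by simp [Subsingleton.elim (A n *ᵥ v) 0]⟩ hdiv
  obtain ⟨φ, t, u, hφ, h⟩ := exists_subseq_divergesAlong hA hdiv
  have isotropic := h.lorentzQ_direction
  exact ⟨φ, u, hφ, h.direction_ne_zero, isotropic, Set.ext fun _ => h.approxStable_iff,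
    ⟨u, h.direction_ne_zero, (lorentzB_self u).trans isotropic, fun _ => id⟩,
    Set.ext fun _ => h.stronglyApproxStable_iff⟩

/-- A divergent sequence of linear Lorentz transformations has a subsequence whose
approximately stable set is a lightlike hyperplane `u^⊥` (with `u` a nonzero isotropic
vector), whose strongly approximately stable set is the isotropic line `ℝu = (u^⊥)^⊥`. -/
theorem lorentz_divergent_subsequence {d : ℕ} (hd : 3 ≤ d)
    (A : ℕ → Matrix (Fin d) (Fin d) ℝ)
    (hA : ∀ n (x : Fin d → ℝ), lorentzQ ((A n).mulVec x) = lorentzQ x)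
    (hdiv : ¬ ∃ C : ℝ, ∀ n (v : Fin d → ℝ), ‖(A n).mulVec v‖ ≤ C * ‖v‖) :
    ∃ (φ : ℕ → ℕ) (u : Fin d → ℝ), StrictMono φ ∧ u ≠ 0 ∧ lorentzQ u = 0 ∧
      {v | ApproxStable (fun n => A (φ n)) v} = {v | lorentzB u v = 0} ∧
      (∃ w : Fin d → ℝ, w ≠ 0 ∧ lorentzB u w = 0 ∧
        ∀ v : Fin d → ℝ, lorentzB u v = 0 → lorentzB w v = 0) ∧
      {v | StronglyApproxStable (fun n => A (φ n)) v} = {v : Fin d → ℝ | ∃ c : ℝ, v = c • u} :=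
  lorentz_divergent_subsequence_general A hA hdiv
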